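/- arXiv:1701.07373 — 2 statements merged into one kernel-verified Lean document; each statement's English description precedes it below -/
import Mathlib

section
/- Let X be a standard Borel space, let κ be a Markov kernel from X to X, and for a probability measure μ on X let P_μ denote the law on the sequence space X^ℕ of the Markov chain (X₀, X₁, X₂, …) with initial distribution X₀ ∼ μ and transition kernel κ (the measure given by the Ionescu–Tulcea construction). Then for any two probability measures μ, ν on X one has KL(P_μ ‖ P_ν) = KL(μ ‖ ν). -/
open MeasureTheory ProbabilityTheory
open scoped ENNReal Classical

/-- The Kullback–Leibler divergence `KL(μ‖ν) = ∫ log(dμ/dν) dμ` if `μ ≪ ν` and the integral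
is well defined (finite), and `KL(μ‖ν) = ∞` otherwise. -/
noncomputable def klDiv {X : Type*} [MeasurableSpace X] (μ ν : Measure X) : ℝ≥0∞ :=
  if μ ≪ ν ∧ Integrable (fun x => Real.log (μ.rnDeriv ν x).toReal) μ
  then ENNReal.ofReal (∫ x, Real.log (μ.rnDeriv ν x).toReal ∂μ)
  else ∞

/-- The law of the first `n + 1` steps `(X₀, …, Xₙ)` of the Markov chain with initial
distribution `μ` and transition kernel `κ`: defined recursively, `X₀ ∼ μ`, and given
`(X₀, …, Xₙ)` the next state `X_{n+1}` is drawn from `κ(Xₙ, ·)`. -/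
noncomputable def chainLaw {X : Type*} [MeasurableSpace X] (κ : Kernel X X) (μ : Measure X) :
    (n : ℕ) → Measure (Fin (n + 1) → X)
  | 0 => μ.map (fun x => fun _ => x)
  | n + 1 =>
      ((chainLaw κ μ n).compProd
        (κ.comap (fun v => v (Fin.last n)) (measurable_pi_apply _))).map
        (fun p => Fin.snoc p.1 p.2)

/-! If `μ ≪ ν` with density `f`, then reweighting the path law `P_ν` by `ω ↦ f (ω 0)` commutes with
every step of the chain, so the reweighted law has the finite-dimensional distributions of `P_μ` and
hence equals `P_μ`. Thus `dP_μ/dP_ν (ω) = f (ω 0)`, and `log f` integrated against the law `μ` of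
`ω 0` gives the same divergence. If `μ` is not absolutely continuous with respect to `ν`, neither
is `P_μ` with respect to `P_ν`, since `μ` and `ν` are their images under `ω ↦ ω 0`. -/

section WithDensity

variable {α β : Type*} [MeasurableSpace α] [MeasurableSpace β]

lemma map_withDensity_comp (μ : Measure α) {g : α → β} (hg : Measurable g)
    {f : β → ℝ≥0∞} (hf : Measurable f) :
    (μ.withDensity (fun a => f (g a))).map g = (μ.map g).withDensity f := by
  ext s hs
  rw [Measure.map_apply hg hs, withDensity_apply _ (hg hs), withDensity_apply _ hs,
    setLIntegral_map hs hf hg]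

lemma withDensity_compProd (μ : Measure α) [SFinite μ] (κ : Kernel α β) [IsSFiniteKernel κ]
    {f : α → ℝ≥0∞} (hf : Measurable f) :
    (μ.withDensity f).compProd κ = (μ.compProd κ).withDensity (fun p => f p.1) := by
  refine Measure.ext_of_lintegral _ fun g hg => ?_
  have hf_fst : Measurable fun p : α × β => f p.1 := hf.comp measurable_fst
  calc
    ∫⁻ p, g p ∂(μ.withDensity f).compProd κ
      = ∫⁻ a, f a * ∫⁻ b, g (a, b) ∂κ a ∂μ := by
        rw [Measure.lintegral_compProd hg,
          lintegral_withDensity_eq_lintegral_mul _ hf hg.lintegral_kernel_prod_right']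
        rfl
    _ = ∫⁻ a, ∫⁻ b, f a * g (a, b) ∂κ a ∂μ :=
        lintegral_congr fun a => (lintegral_const_mul _ (hg.comp measurable_prodMk_left)).symm
    _ = ∫⁻ p, g p ∂(μ.compProd κ).withDensity (fun p => f p.1) := by
        rw [lintegral_withDensity_eq_lintegral_mul _ hf_fst hg,
          Measure.lintegral_compProd (hf_fst.mul hg)]
        rfl

end WithDensity

section Divergence

variable {α β : Type*} [MeasurableSpace α] [MeasurableSpace β]

lemma klDiv_of_not_ac {μ ν : Measure α} (h : ¬ μ ≪ ν) : klDiv μ ν = ∞ :=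
  if_neg fun h' => h h'.1

lemma klDiv_withDensity (ν : Measure α) [SigmaFinite ν] {f : α → ℝ≥0∞} (hf : Measurable f) :
    klDiv (ν.withDensity f) ν =
      if Integrable (fun a => Real.log (f a).toReal) (ν.withDensity f)
      then ENNReal.ofReal (∫ a, Real.log (f a).toReal ∂ν.withDensity f)
      else ∞ := by
  have hac : ν.withDensity f ≪ ν := withDensity_absolutelyContinuous ν f
  have hlog : (fun a => Real.log ((ν.withDensity f).rnDeriv ν a).toReal)
      =ᵐ[ν.withDensity f] fun a => Real.log (f a).toReal := by
    filter_upwards [hac.ae_le (Measure.rnDeriv_withDensity ν hf)] with a ha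
    rw [ha]
  simp only [klDiv, hac, true_and, integrable_congr hlog, integral_congr_ae hlog]

lemma klDiv_withDensity_comp (ν : Measure α) {g : α → β} (hg : Measurable g)
    [SigmaFinite (ν.map g)] {f : β → ℝ≥0∞} (hf : Measurable f) :
    klDiv (ν.withDensity (fun a => f (g a))) ν = klDiv ((ν.map g).withDensity f) (ν.map g) := by
  have : SigmaFinite ν := .of_map ν hg.aemeasurable inferInstance
  have hlog : Measurable fun b => Real.log (f b).toReal := by fun_prop
  rw [klDiv_withDensity ν (f := fun a => f (g a)) (hf.comp hg), klDiv_withDensity _ hf,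
    ← map_withDensity_comp ν hg hf,
    integrable_map_measure hlog.aestronglyMeasurable hg.aemeasurable,
    integral_map hg.aemeasurable hlog.aestronglyMeasurable]
  rfl

end Divergence

lemma measurable_finSnoc {n : ℕ} {X : Fin (n + 1) → Type*} [∀ i, MeasurableSpace (X i)] :
    Measurable fun p : (∀ i : Fin n, X i.castSucc) × X (Fin.last n) =>
      (Fin.snoc p.1 p.2 : ∀ i, X i) := by
  refine measurable_pi_lambda _ (Fin.lastCases ?_ fun j => ?_)
  · simpa only [Fin.snoc_last] using measurable_snd
  · simpa only [Fin.snoc_castSucc] using measurable_fst.eval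

lemma measure_ext_of_map_fin {X : ℕ → Type*} [∀ n, MeasurableSpace (X n)]
    {P Q : Measure (∀ n, X n)} [IsFiniteMeasure P]
    (h : ∀ n : ℕ, P.map (fun ω => fun i : Fin (n + 1) => ω i)
      = Q.map (fun ω => fun i : Fin (n + 1) => ω i)) : P = Q := by
  refine IsProjectiveLimit.unique (P := fun I => P.map I.restrict) (fun _ => rfl) fun I => ?_
  let restrictFin : (∀ i : Fin (I.sup id + 1), X i) → ∀ i : I, X i := fun v i =>
    v ⟨i, Nat.lt_succ_of_le (Finset.le_sup (f := id) i.2)⟩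
  have hrestrict : Measurable restrictFin := by fun_prop
  have map_restrict (R : Measure (∀ n, X n)) : R.map I.restrict =
      (R.map (fun ω => fun i : Fin (I.sup id + 1) => ω i)).map restrictFin := by
    rw [Measure.map_map hrestrict (by fun_prop)]
    rfl
  rw [map_restrict Q, ← h, ← map_restrict P]

section MarkovChain

variable {X : Type*} [MeasurableSpace X] {κ : Kernel X X} {μ ν : Measure X}
  {P Q : Measure (ℕ → X)} {f : X → ℝ≥0∞}

instance sFinite_chainLaw [SFinite μ] (n : ℕ) : SFinite (chainLaw κ μ n) := by
  cases n <;> unfold chainLaw <;> infer_instance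

lemma chainLaw_withDensity [IsSFiniteKernel κ] [SFinite μ] (hf : Measurable f) (n : ℕ) :
    chainLaw κ (μ.withDensity f) n = (chainLaw κ μ n).withDensity (fun v => f (v 0)) := by
  induction n with
  | zero =>
    exact map_withDensity_comp μ (g := fun x => fun _ : Fin 1 => x) (f := fun v => f (v 0))
      (by fun_prop) (by fun_prop)
  | succ n ih =>
    rw [chainLaw, ih, withDensity_compProd _ _ (by fun_prop)]
    exact map_withDensity_comp _ (f := fun v : Fin (n + 2) → X => f (v 0)) measurable_finSnoc
      (by fun_prop)

/-- `P` is a law on path space of the Markov chain with initial distribution `μ` and transition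
kernel `κ`, expressed through its finite-dimensional distributions. -/
def IsMarkovChainLaw (κ : Kernel X X) (μ : Measure X) (P : Measure (ℕ → X)) : Prop :=
  ∀ n : ℕ, P.map (fun ω => fun i : Fin (n + 1) => ω i) = chainLaw κ μ n

namespace IsMarkovChainLaw

lemma map_eval_zero (hP : IsMarkovChainLaw κ μ P) : P.map (fun ω => ω 0) = μ := by
  have heval : Measurable fun v : Fin 1 → X => v 0 := measurable_pi_apply 0
  calc
    P.map (fun ω => ω 0) = (P.map (fun ω => fun i : Fin 1 => ω i)).map (fun v => v 0) := by
      rw [Measure.map_map heval (by fun_prop)]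
      rfl
    _ = (μ.map (fun x => fun _ : Fin 1 => x)).map (fun v => v 0) := by rw [hP 0, chainLaw]
    _ = μ := by
      rw [Measure.map_map heval (by fun_prop)]
      exact Measure.map_id

lemma isFiniteMeasure [IsFiniteMeasure μ] (hP : IsMarkovChainLaw κ μ P) : IsFiniteMeasure P := by
  have : IsFiniteMeasure (P.map fun ω => ω 0) := by rwa [hP.map_eval_zero]
  exact Measure.isFiniteMeasure_of_map (measurable_pi_apply 0).aemeasurable

lemma unique [IsFiniteMeasure μ] (hP : IsMarkovChainLaw κ μ P) (hQ : IsMarkovChainLaw κ μ Q) :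
    P = Q :=
  have := hP.isFiniteMeasure
  measure_ext_of_map_fin fun n => (hP n).trans (hQ n).symm

lemma withDensity [IsSFiniteKernel κ] [SFinite μ] (hP : IsMarkovChainLaw κ μ P)
    (hf : Measurable f) :
    IsMarkovChainLaw κ (μ.withDensity f) (P.withDensity fun ω => f (ω 0)) := fun n => by
  rw [chainLaw_withDensity hf, ← hP n]
  exact map_withDensity_comp P (f := fun v : Fin (n + 1) → X => f (v 0)) (by fun_prop)
    (by fun_prop)

lemma eq_withDensity_rnDeriv [IsSFiniteKernel κ] [IsFiniteMeasure μ] [SigmaFinite ν]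
    (hμν : μ ≪ ν) (hP : IsMarkovChainLaw κ μ P) (hQ : IsMarkovChainLaw κ ν Q) :
    P = Q.withDensity fun ω => μ.rnDeriv ν (ω 0) := by
  have hdensity := hQ.withDensity (Measure.measurable_rnDeriv μ ν)
  rw [Measure.withDensity_rnDeriv_eq μ ν hμν] at hdensity
  exact hP.unique hdensity

lemma initial_absolutelyContinuous (hP : IsMarkovChainLaw κ μ P) (hQ : IsMarkovChainLaw κ ν Q)
    (hPQ : P ≪ Q) : μ ≪ ν := by
  rw [← hP.map_eval_zero, ← hQ.map_eval_zero]
  exact hPQ.map (measurable_pi_apply 0)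

end IsMarkovChainLaw

end MarkovChain

theorem klDiv_chain_eq_klDiv_general {X : Type*} [MeasurableSpace X]
    (κ : Kernel X X) [IsSFiniteKernel κ]
    (μ ν : Measure X) [IsFiniteMeasure μ] [SigmaFinite ν] (Pμ Pν : Measure (ℕ → X))
    (hPμ : IsMarkovChainLaw κ μ Pμ) (hPν : IsMarkovChainLaw κ ν Pν) :
    klDiv Pμ Pν = klDiv μ ν := by
  by_cases hμν : μ ≪ ν
  · have : SigmaFinite (Pν.map fun ω => ω 0) := by rwa [hPν.map_eval_zero]
    calc
      klDiv Pμ Pν = klDiv (Pν.withDensity fun ω => μ.rnDeriv ν (ω 0)) Pν := by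
        rw [← hPμ.eq_withDensity_rnDeriv hμν hPν]
      _ = klDiv (ν.withDensity (μ.rnDeriv ν)) ν := by
        rw [klDiv_withDensity_comp Pν (measurable_pi_apply 0) (Measure.measurable_rnDeriv μ ν),
          hPν.map_eval_zero]
      _ = klDiv μ ν := by rw [Measure.withDensity_rnDeriv_eq μ ν hμν]
  · rw [klDiv_of_not_ac hμν,
      klDiv_of_not_ac fun h => hμν (hPμ.initial_absolutelyContinuous hPν h)]

/-- **Markov chains with the same transition mechanism preserve relative entropy:**
`KL(P_μ ‖ P_ν) = KL(μ ‖ ν)`. Here `X` is a standard Borel space, `κ` a Markov kernel from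
`X` to itself, and `Pμ` (resp. `Pν`) is the law on the sequence space `X^ℕ` of the Markov
chain with initial distribution `μ` (resp. `ν`) and transition kernel `κ`, i.e. the unique
measure given by the Ionescu–Tulcea construction, characterized by its finite-dimensional
distributions `chainLaw κ μ n`. -/
theorem klDiv_chain_eq_klDiv {X : Type*} [MeasurableSpace X] [StandardBorelSpace X]
    (κ : Kernel X X) [IsMarkovKernel κ]
    (μ ν : Measure X) [IsProbabilityMeasure μ] [IsProbabilityMeasure ν]
    (Pμ Pν : Measure (ℕ → X)) [IsProbabilityMeasure Pμ] [IsProbabilityMeasure Pν]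
    (hPμ : ∀ n : ℕ, Pμ.map (fun ω => fun i : Fin (n + 1) => ω i) = chainLaw κ μ n)
    (hPν : ∀ n : ℕ, Pν.map (fun ω => fun i : Fin (n + 1) => ω i) = chainLaw κ ν n) :
    klDiv Pμ Pν = klDiv μ ν :=
  klDiv_chain_eq_klDiv_general κ μ ν Pμ Pν hPμ hPν
end

section
/- Let X be a complete separable metric space equipped with its Borel σ-algebra, let ν be a probability measure on X, and let (μₙ) be a sequence of probability measures on X converging weakly to a probability measure μ. If liminf_{n→∞} KL(μₙ ‖ ν) < ∞, then μ is absolutely continuous with respect to ν. -/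
open MeasureTheory Filter
open scoped ENNReal Classical BoundedContinuousFunction

/-!
A bound `KL(m ‖ ν) ≤ C` makes `m` absolutely continuous with respect to `ν` uniformly in `m`:
integrating Young's inequality `t s ≤ (t log t + 1 - t) + (eˢ - 1)` at `t = dm/dν` over a set `A`
gives `s m(A) ≤ C + (eˢ - 1) ν(A)`, and a large `s` turns this into `m(A) ≤ ε + K ν(A)` with `K`
depending only on `C` and `ε`. On open sets this bound passes to the weak limit, by the portmanteau
theorem along the indices where the divergence is at most `C`. Outer regularity of `ν` then gives
every `ν`-null set limit measure at most `ε`.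
-/

section Entropy

variable {X : Type*} [MeasurableSpace X]

lemma klDiv_eq_informationTheory_klDiv {μ ν : Measure X} (h : μ Set.univ = ν Set.univ) :
    klDiv μ ν = InformationTheory.klDiv μ ν := by
  have h_real : μ.real Set.univ = ν.real Set.univ := congrArg ENNReal.toReal h
  rw [InformationTheory.klDiv_def, h_real]
  simp only [add_sub_cancel_right]
  rfl

lemma mul_le_klFun_add_exp_sub_one {t : ℝ} (ht : 0 ≤ t) (s : ℝ) :
    t * s ≤ InformationTheory.klFun t + (Real.exp s - 1) := by
  rw [InformationTheory.klFun_apply]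
  rcases ht.eq_or_lt with rfl | ht
  · simp [Real.exp_nonneg]
  · have h_tangent := Real.add_one_le_exp (s - Real.log t)
    rw [Real.exp_sub, Real.exp_log ht, le_div_iff₀ ht] at h_tangent
    linarith

lemma ofReal_mul_measure_le_klDiv_add (μ ν : Measure X) [IsFiniteMeasure μ] [IsFiniteMeasure ν]
    (s : ℝ) (A : Set X) :
    ENNReal.ofReal s * μ A ≤
      InformationTheory.klDiv μ ν + ENNReal.ofReal (Real.exp s - 1) * ν A := by
  by_cases hac : μ ≪ ν
  swap
  · simp [hac]
  have h_young : ∀ᵐ x ∂ν, ENNReal.ofReal s * μ.rnDeriv ν x ≤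
      ENNReal.ofReal (InformationTheory.klFun (μ.rnDeriv ν x).toReal) +
        ENNReal.ofReal (Real.exp s - 1) := by
    filter_upwards [μ.rnDeriv_lt_top ν] with x hx
    calc ENNReal.ofReal s * μ.rnDeriv ν x
        = ENNReal.ofReal ((μ.rnDeriv ν x).toReal * s) := by
          rw [ENNReal.ofReal_mul ENNReal.toReal_nonneg, ENNReal.ofReal_toReal hx.ne, mul_comm]
      _ ≤ _ := (ENNReal.ofReal_le_ofReal
          (mul_le_klFun_add_exp_sub_one ENNReal.toReal_nonneg s)).trans ENNReal.ofReal_add_le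
  rw [InformationTheory.klDiv_eq_lintegral_klFun_of_ac hac]
  calc ENNReal.ofReal s * μ A
      = ∫⁻ x in A, ENNReal.ofReal s * μ.rnDeriv ν x ∂ν := by
        rw [lintegral_const_mul _ (μ.measurable_rnDeriv ν), Measure.setLIntegral_rnDeriv hac]
    _ ≤ ∫⁻ x in A, (ENNReal.ofReal (InformationTheory.klFun (μ.rnDeriv ν x).toReal) +
          ENNReal.ofReal (Real.exp s - 1)) ∂ν :=
        lintegral_mono_ae (ae_restrict_of_ae h_young)
    _ = (∫⁻ x in A, ENNReal.ofReal (InformationTheory.klFun (μ.rnDeriv ν x).toReal) ∂ν) +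
          ENNReal.ofReal (Real.exp s - 1) * ν A := by
        rw [lintegral_add_right _ measurable_const, setLIntegral_const]
    _ ≤ _ := by gcongr; exact Measure.restrict_le_self

lemma exists_forall_measure_le_of_klDiv_le (ν : Measure X) [IsFiniteMeasure ν]
    {C ε : ℝ≥0∞} (hC : C ≠ ∞) (hε : ε ≠ 0) :
    ∃ K ≠ ∞, ∀ (μ : Measure X) [IsFiniteMeasure μ], InformationTheory.klDiv μ ν ≤ C →
      ∀ A, μ A ≤ ε + K * ν A := by
  obtain ⟨n, hn⟩ := ENNReal.exists_nat_mul_gt hε hC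
  have hn_ne : (n : ℝ≥0∞) ≠ 0 := by
    intro h
    simp [h] at hn
  have hn_top : (n : ℝ≥0∞) ≠ ∞ := ENNReal.natCast_ne_top n
  refine ⟨ENNReal.ofReal (Real.exp n - 1) / n,
    ENNReal.div_ne_top ENNReal.ofReal_ne_top hn_ne, fun μ _ hμ A => ?_⟩
  rw [← ENNReal.mul_le_mul_iff_right hn_ne hn_top]
  calc (n : ℝ≥0∞) * μ A
      ≤ InformationTheory.klDiv μ ν + ENNReal.ofReal (Real.exp n - 1) * ν A := by
        simpa only [ENNReal.ofReal_natCast] using ofReal_mul_measure_le_klDiv_add μ ν n A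
    _ ≤ n * ε + ENNReal.ofReal (Real.exp n - 1) * ν A := by gcongr; exact hμ.trans hn.le
    _ = n * (ε + ENNReal.ofReal (Real.exp n - 1) / n * ν A) := by
        rw [mul_add, ← mul_assoc, ENNReal.mul_div_cancel hn_ne hn_top]

end Entropy

section Topology

variable {X : Type*} [TopologicalSpace X] [MeasurableSpace X]

lemma absolutelyContinuous_of_forall_isOpen_measure_le {μ ν : Measure X} [ν.OuterRegular]
    (h : ∀ ε ≠ 0, ∃ K ≠ ∞, ∀ U, IsOpen U → μ U ≤ ε + K * ν U) : μ ≪ ν := by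
  intro A hA
  refine nonpos_iff_eq_zero.mp (ENNReal.le_of_forall_pos_le_add fun ε hε _ => ?_)
  have hε_half : (ε / 2 : ℝ≥0∞) ≠ 0 := by simp [hε.ne']
  obtain ⟨K, hK, hμ⟩ := h (ε / 2) hε_half
  obtain ⟨U, hAU, hU, hνU⟩ := A.exists_isOpen_le_add ν (ENNReal.div_ne_zero.mpr ⟨hε_half, hK⟩)
  rw [hA, zero_add] at hνU
  calc μ A ≤ μ U := measure_mono hAU
    _ ≤ ε / 2 + K * ν U := hμ U hU
    _ ≤ ε / 2 + K * (ε / 2 / K) := by gcongr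
    _ ≤ ε / 2 + ε / 2 := by gcongr; exact ENNReal.mul_div_le
    _ = 0 + ε := by rw [ENNReal.add_halves, zero_add]

variable [OpensMeasurableSpace X] [HasOuterApproxClosed X] {ι : Type*} {l : Filter ι}

lemma measure_le_of_tendsto_of_frequently_measure_le {μ : FiniteMeasure X}
    {μs : ι → FiniteMeasure X} (hμs : Tendsto μs l (nhds μ)) {U : Set X} (hU : IsOpen U)
    {b : ℝ≥0∞} (hb : ∃ᶠ i in l, (μs i : Measure X) U ≤ b) : (μ : Measure X) U ≤ b := by
  have h_mass : Tendsto (fun i => (μs i : Measure X) Set.univ) l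
      (nhds ((μ : Measure X) Set.univ)) := by
    simpa only [FiniteMeasure.ennreal_mass] using ENNReal.tendsto_coe.mpr hμs.mass
  have h_univ : (μ : Measure X) Set.univ ≤ b + (μ : Measure X) Uᶜ := by
    refine ENNReal.le_of_forall_pos_le_add fun ε hε _ => ?_
    have h_compl : ∀ᶠ i in l, (μs i : Measure X) Uᶜ < (μ : Measure X) Uᶜ + ε :=
      eventually_lt_of_limsup_lt <|
        (FiniteMeasure.limsup_measure_closed_le_of_tendsto hμs hU.isClosed_compl).trans_lt
          (ENNReal.lt_add_right (measure_ne_top _ _) (by simpa using hε.ne'))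
    refine le_of_tendsto_of_frequently h_mass ((hb.and_eventually h_compl).mono ?_)
    rintro i ⟨hiU, hi_compl⟩
    rw [← measure_add_measure_compl hU.measurableSet, add_assoc]
    exact add_le_add hiU hi_compl.le
  rw [← measure_add_measure_compl hU.measurableSet] at h_univ
  exact (ENNReal.add_le_add_iff_right (measure_ne_top _ _)).mp h_univ

theorem absolutelyContinuous_of_liminf_klDiv_lt_top_general
    (ν μ : Measure X) (μs : ι → Measure X)
    [IsFiniteMeasure ν] [ν.OuterRegular] [IsFiniteMeasure μ] [∀ i, IsFiniteMeasure (μs i)]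
    (hweak : ∀ f : X →ᵇ ℝ, Tendsto (fun i => ∫ x, f x ∂(μs i)) l (nhds (∫ x, f x ∂μ)))
    (hfin : liminf (fun i => InformationTheory.klDiv (μs i) ν) l < ∞) :
    μ ≪ ν := by
  obtain ⟨C, hC, hC_top⟩ := exists_between hfin
  have hkl : ∃ᶠ i in l, InformationTheory.klDiv (μs i) ν < C :=
    frequently_lt_of_liminf_lt (by isBoundedDefault) hC
  let limit : FiniteMeasure X := ⟨μ, inferInstance⟩
  let approx (i : ι) : FiniteMeasure X := ⟨μs i, inferInstance⟩
  have h_tendsto : Tendsto approx l (nhds limit) :=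
    FiniteMeasure.tendsto_iff_forall_integral_tendsto.mpr hweak
  refine absolutelyContinuous_of_forall_isOpen_measure_le fun ε hε => ?_
  obtain ⟨K, hK, hbound⟩ := exists_forall_measure_le_of_klDiv_le ν hC_top.ne hε
  exact ⟨K, hK, fun U hU => measure_le_of_tendsto_of_frequently_measure_le h_tendsto hU
    (hkl.mono fun i hi => hbound (μs i) hi.le U)⟩

end Topology

/-- **Absolute continuity of weak limits with bounded relative entropy.** On a complete
separable metric space with its Borel σ-algebra, if probability measures `μₙ` converge
weakly to `μ` (i.e. `∫ f dμₙ → ∫ f dμ` for every bounded continuous `f`) and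
`liminf_n KL(μₙ ‖ ν) < ∞`, then `μ ≪ ν`. -/
theorem absolutelyContinuous_of_liminf_klDiv_lt_top {X : Type*} [MetricSpace X]
    [CompleteSpace X] [TopologicalSpace.SeparableSpace X] [MeasurableSpace X] [BorelSpace X]
    (ν μ : Measure X) (μs : ℕ → Measure X)
    [IsProbabilityMeasure ν] [IsProbabilityMeasure μ] [∀ n, IsProbabilityMeasure (μs n)]
    (hweak : ∀ f : X →ᵇ ℝ,
      Tendsto (fun n => ∫ x, f x ∂(μs n)) atTop (nhds (∫ x, f x ∂μ)))
    (hfin : liminf (fun n => klDiv (μs n) ν) atTop < ∞) :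
    μ ≪ ν := by
  simp only [klDiv_eq_informationTheory_klDiv, measure_univ] at hfin
  exact absolutelyContinuous_of_liminf_klDiv_lt_top_general ν μ μs hweak hfin
end
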